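/- There exists a nonzero homogeneous polynomial f ∈ ℝ[X₀, …, Xₙ] of degree d − n − 1 such that f ∈ I_v^{ord_P(L_v)} for every nonzero v ∈ ℝ^{n+1}. (Existence part of the paper's main theorem: Warren's adjoint polynomial of the polytope P is such a polynomial, vanishing along every linear space cut out by facet hyperplanes to at least the prescribed order.) -/

import Mathlib

open MvPolynomial Finset Classical

noncomputable section

/-- The homogenization embedding `y ↦ (1, y₁, …, yₙ)`. -/
def lift1 {n : ℕ} (y : Fin n → ℝ) : Fin (n + 1) → ℝ := Fin.cons 1 y

/-- The polytope `P = {y ∈ ℝⁿ | ℓᵢ(1,y) ≥ 0 for all i}`. -/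
def polytopeOf {n d : ℕ} (ℓ : Fin d → MvPolynomial (Fin (n + 1)) ℝ) : Set (Fin n → ℝ) :=
  {y | ∀ i, 0 ≤ eval (lift1 y) (ℓ i)}

/-- The facet `Fᵢ = {y ∈ P | ℓᵢ(1,y) = 0}`. -/
def facetOf {n d : ℕ} (ℓ : Fin d → MvPolynomial (Fin (n + 1)) ℝ) (i : Fin d) :
    Set (Fin n → ℝ) :=
  {y ∈ polytopeOf ℓ | eval (lift1 y) (ℓ i) = 0}

/-- The flat `F_v = {i | ℓᵢ(v) = 0}` of all facet hyperplanes through `v`. -/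
def flatOf {n d : ℕ} (ℓ : Fin d → MvPolynomial (Fin (n + 1)) ℝ) (v : Fin (n + 1) → ℝ) :
    Finset (Fin d) :=
  Finset.univ.filter fun i => eval v (ℓ i) = 0

/-- The rank `r_v`: the dimension of the linear span of `{ℓᵢ : i ∈ F_v}`. -/
def rkOf {n d : ℕ} (ℓ : Fin d → MvPolynomial (Fin (n + 1)) ℝ) (v : Fin (n + 1) → ℝ) : ℕ :=
  Module.finrank ℝ (Submodule.span ℝ (ℓ '' (flatOf ℓ v : Set (Fin d))))

/-- The nullity `nl_v = |F_v| − r_v`. -/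
def nlOf {n d : ℕ} (ℓ : Fin d → MvPolynomial (Fin (n + 1)) ℝ) (v : Fin (n + 1) → ℝ) : ℕ :=
  (flatOf ℓ v).card - rkOf ℓ v

/-- The set `P_v = {y ∈ P | ℓᵢ(1,y) = 0 for all i ∈ F_v}`. -/
def faceOf {n d : ℕ} (ℓ : Fin d → MvPolynomial (Fin (n + 1)) ℝ) (v : Fin (n + 1) → ℝ) :
    Set (Fin n → ℝ) :=
  {y ∈ polytopeOf ℓ | ∀ i ∈ flatOf ℓ v, eval (lift1 y) (ℓ i) = 0}

/-- The order `ord_P(L_v)`: equal to `nl_v` if `P_v` is nonempty with affine span of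
dimension `n − r_v`, and to `nl_v + 1` otherwise. -/
def ordOf {n d : ℕ} (ℓ : Fin d → MvPolynomial (Fin (n + 1)) ℝ) (v : Fin (n + 1) → ℝ) : ℕ :=
  if (faceOf ℓ v).Nonempty ∧
      Module.finrank ℝ (affineSpan ℝ (faceOf ℓ v)).direction = n - rkOf ℓ v
  then nlOf ℓ v
  else nlOf ℓ v + 1

/-- The ideal `I_v ⊆ ℂ[X₀,…,Xₙ]` generated by all homogeneous degree-1 polynomials
vanishing at the real point `v`. -/
def pointIdealC {n : ℕ} (v : Fin (n + 1) → ℝ) : Ideal (MvPolynomial (Fin (n + 1)) ℂ) :=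
  Ideal.span {p | p.IsHomogeneous 1 ∧ eval (fun i => (v i : ℂ)) p = 0}

/-- The ideal `I_v ⊆ ℝ[X₀,…,Xₙ]` generated by all homogeneous degree-1 polynomials
vanishing at `v`. -/
def pointIdealR {n : ℕ} (v : Fin (n + 1) → ℝ) : Ideal (MvPolynomial (Fin (n + 1)) ℝ) :=
  Ideal.span {p | p.IsHomogeneous 1 ∧ eval v p = 0}

/-- Complexification of a real polynomial. -/
def toC {n : ℕ} (p : MvPolynomial (Fin (n + 1)) ℝ) : MvPolynomial (Fin (n + 1)) ℂ :=
  map (algebraMap ℝ ℂ) p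

/-- The hypotheses on the facet equations `ℓ₁, …, ℓ_d` of a full-dimensional compact convex
polytope `P ⊆ ℝⁿ`: the `ℓᵢ` are pairwise non-proportional homogeneous degree-1 polynomials,
`P` is compact with affine span all of `ℝⁿ`, and each facet `Fᵢ` is nonempty with affine
span of dimension `n − 1`. -/
structure IsPolytopeSetup {n d : ℕ} (ℓ : Fin d → MvPolynomial (Fin (n + 1)) ℝ) : Prop where
  hn : 1 ≤ n
  hd : n + 1 ≤ d
  hhom : ∀ i, (ℓ i).IsHomogeneous 1
  hne : ∀ i, ℓ i ≠ 0
  hprop : ∀ i j, i ≠ j → ∀ c : ℝ, c • ℓ i ≠ ℓ j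
  hcpt : IsCompact (polytopeOf ℓ)
  hfull : affineSpan ℝ (polytopeOf ℓ) = ⊤
  hfacet_ne : ∀ i, (facetOf ℓ i).Nonempty
  hfacet : ∀ i, Module.finrank ℝ (affineSpan ℝ (facetOf ℓ i)).direction = n - 1

/-!
Write `ℓᵢ = aᵢ · X` and let `C` be the cone spanned by the vectors `aᵢ`, the dual of the cone over
`P`. On the interior of the cone over `P` the Laplace transform `x ↦ ∫_C exp (-x · y) dy` is finite.
Any triangulation of `C` into cones over bases `(aᵢ)_{i ∈ s}` evaluates it as a sum of terms
`vol_s / ∏_{i ∈ s} ℓᵢ(x)`, so its product with `∏ᵢ ℓᵢ` is the polynomial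
`f = ∑ₛ vol_s ∏_{i ∉ s} ℓᵢ`, which does not depend on the triangulation: this is the adjoint.

Each term of `f` vanishes at `v` to order at least `|F_v \ s|`. As `s` indexes a basis,
`|F_v ∩ s| ≤ r_v`, which gives order `nl_v`. One order more is gained from a triangulation in which
no cell contains a basis of the span of `{aᵢ : i ∈ F_v}`. If that span meets the convex hull of the
remaining `aᵢ`, then the regular triangulation whose heights are close to `0` on `F_v` and `-1` off
`F_v` has this property. Otherwise a hyperplane separates the two, and its normal vector is a point
in the relative interior of the face `P_v`, which therefore has the expected dimension.
-/

section SimplicialCone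

variable {κ V : Type*} [Fintype κ] [AddCommGroup V] [Module ℝ V]

/-- The relatively open simplicial cone on the vectors `b k`: their combinations with positive
coefficients. -/
def openCone (b : κ → V) : Set V :=
  {y | ∃ c : κ → ℝ, (∀ k, 0 < c k) ∧ ∑ k, c k • b k = y}

lemma openCone_subset_hull (b : κ → V) :
    openCone b ⊆ (PointedCone.hull ℝ (Set.range b) : Set V) := by
  rintro _ ⟨c, hc, rfl⟩
  exact Submodule.sum_mem _ fun k _ =>
    Submodule.smul_mem _ (⟨c k, (hc k).le⟩ : {r : ℝ // 0 ≤ r})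
      (Submodule.subset_span (Set.mem_range_self k))

lemma mem_hull_range_iff {b : κ → V} {y : V} :
    y ∈ PointedCone.hull ℝ (Set.range b) ↔ ∃ c : κ → ℝ, 0 ≤ c ∧ ∑ k, c k • b k = y := by
  refine (Submodule.mem_span_range_iff_exists_fun _).trans ⟨?_, ?_⟩
  · rintro ⟨c, rfl⟩
    exact ⟨fun k => c k, fun k => (c k).2, rfl⟩
  · rintro ⟨c, hc, rfl⟩
    exact ⟨fun k => ⟨c k, hc k⟩, rfl⟩

lemma openCone_eq_image (b : κ → V) :
    openCone b = Fintype.linearCombination ℝ b '' Set.univ.pi fun _ => Set.Ioi 0 := by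
  ext y
  simp [openCone, Fintype.linearCombination_apply]

end SimplicialCone

section BasisCell

variable {ι V : Type*}

lemma range_finset_restrict (a : ι → V) (s : Finset ι) : Set.range (s.restrict a) = a '' s := by
  ext y
  simp

variable [AddCommGroup V] [Module ℝ V]

/-- The subfamily `s` of `a` is a basis of `V`; such `s` index the full-dimensional simplicial
cones with rays among the `a i`. -/
structure IsBasisCell (a : ι → V) (s : Finset ι) : Prop where
  linearIndependent : LinearIndependent ℝ (s.restrict a)
  top_le_span : ⊤ ≤ Submodule.span ℝ (a '' s)

/-- The basis of `V` given by a cell. -/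
def IsBasisCell.basis {a : ι → V} {s : Finset ι} (hs : IsBasisCell a s) : Module.Basis s ℝ V :=
  Module.Basis.mk hs.linearIndependent ((range_finset_restrict a s).symm ▸ hs.top_le_span)

lemma IsBasisCell.coe_basis {a : ι → V} {s : Finset ι} (hs : IsBasisCell a s) :
    ⇑hs.basis = s.restrict a :=
  Module.Basis.coe_mk _ _

lemma IsBasisCell.eq_of_subset {a : ι → V} {s t : Finset ι} (hs : IsBasisCell a s)
    (ht : IsBasisCell a t) (hst : s ⊆ t) : s = t := by
  refine eq_of_subset_of_card_le hst ?_
  rw [← Fintype.card_coe t, ← Module.finrank_eq_card_basis ht.basis,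
    Module.finrank_eq_card_basis hs.basis, Fintype.card_coe]

end BasisCell

section Laplace

open MeasureTheory

variable {κ V : Type*} [Fintype κ] [NormedAddCommGroup V] [NormedSpace ℝ V]

lemma isOpen_openCone [FiniteDimensional ℝ V] {b : κ → V}
    (hb : ⊤ ≤ Submodule.span ℝ (Set.range b)) : IsOpen (openCone b) := by
  have surjective : Function.Surjective (Fintype.linearCombination ℝ b) := by
    rwa [← LinearMap.range_eq_top, Fintype.range_linearCombination, eq_top_iff]
  rw [openCone_eq_image]
  exact (Fintype.linearCombination ℝ b).toContinuousLinearMap.isOpenMap surjective _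
    (isOpen_set_pi Set.finite_univ fun _ _ => isOpen_Ioi)

lemma IsBasisCell.isOpen_openCone [FiniteDimensional ℝ V] {ι : Type*} {a : ι → V} {s : Finset ι}
    (hs : IsBasisCell a s) : IsOpen (openCone (s.restrict a)) :=
  _root_.isOpen_openCone ((range_finset_restrict a s).symm ▸ hs.top_le_span)

variable [MeasurableSpace V]

lemma measureReal_parallelepiped_pos (μ : Measure V) [μ.IsAddHaarMeasure]
    (b : Module.Basis κ ℝ V) : 0 < μ.real (parallelepiped b) := by
  rw [← b.coe_parallelepiped]
  exact ENNReal.toReal_pos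
    (Measure.measure_pos_of_nonempty_interior μ b.parallelepiped.interior_nonempty).ne'
    b.parallelepiped.isCompact.measure_lt_top.ne

variable [BorelSpace V]

lemma map_equivFunL_symm_volume (b : Module.Basis κ ℝ V) :
    Measure.map b.equivFunL.symm volume = b.addHaar := by
  have := b.finiteDimensional_of_finite
  rw [← addHaarMeasure_eq_volume_pi, ← Module.Basis.parallelepiped_basisFun,
    ← Module.Basis.addHaar_def, Module.Basis.map_addHaar]
  refine congrArg _ (Module.Basis.eq_of_apply_eq fun k => ?_)
  rw [Module.Basis.map_apply, Pi.basisFun_apply]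
  exact (b.equivFun_symm_apply _).trans (by simp [Pi.single_apply])

variable (μ : Measure V) [μ.IsAddHaarMeasure]

lemma eq_smul_map_volume (b : Module.Basis κ ℝ V) :
    μ = μ (parallelepiped b) • Measure.map b.equivFunL.symm volume := by
  have := b.finiteDimensional_of_finite
  rw [map_equivFunL_symm_volume, Module.Basis.addHaar_def, ← Module.Basis.coe_parallelepiped]
  exact Measure.addHaarMeasure_unique μ b.parallelepiped

lemma integral_exp_neg_pi_Ioi {x : κ → ℝ} (hx : ∀ k, 0 < x k) :
    ∫ c in Set.univ.pi fun _ => Set.Ioi (0 : ℝ), Real.exp (-∑ k, c k * x k) = ∏ k, (x k)⁻¹ := by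
  simp only [← sum_neg_distrib, Real.exp_sum, ← mul_neg]
  rw [volume_pi, Measure.restrict_pi_pi,
    integral_fintype_prod_eq_prod (fun k t => Real.exp (t * -x k))]
  refine prod_congr rfl fun k _ => ?_
  simp only [mul_comm _ (-x k)]
  rw [integral_exp_mul_Ioi (neg_lt_zero.mpr (hx k))]
  simp

theorem integral_exp_neg_openCone (b : Module.Basis κ ℝ V) {x : Module.Dual ℝ V}
    (hx : ∀ k, 0 < x (b k)) :
    ∫ y in openCone b, Real.exp (-x y) ∂μ = μ.real (parallelepiped b) * ∏ k, (x (b k))⁻¹ := by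
  have equivFunL_symm_apply : ⇑b.equivFunL.symm = Fintype.linearCombination ℝ b :=
    funext b.equivFun_symm_apply
  have preimage_openCone : b.equivFunL.symm ⁻¹' openCone b = Set.univ.pi fun _ => Set.Ioi 0 := by
    rw [openCone_eq_image, ← equivFunL_symm_apply]
    exact Set.preimage_image_eq _ b.equivFunL.symm.injective
  have embedding : MeasurableEmbedding b.equivFunL.symm :=
    b.equivFunL.symm.toHomeomorph.measurableEmbedding
  calc ∫ y in openCone b, Real.exp (-x y) ∂μ
      = μ.real (parallelepiped b) *
          ∫ y in openCone b, Real.exp (-x y) ∂(Measure.map b.equivFunL.symm volume) := by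
        conv_lhs => rw [eq_smul_map_volume μ b]
        rw [Measure.restrict_smul, integral_smul_measure, smul_eq_mul, Measure.real]
    _ = μ.real (parallelepiped b) *
          ∫ c in Set.univ.pi fun _ => Set.Ioi 0, Real.exp (-∑ k, c k * x (b k)) := by
        rw [embedding.setIntegral_map, preimage_openCone, equivFunL_symm_apply]
        simp only [Fintype.linearCombination_apply, map_sum, map_smul, smul_eq_mul]
    _ = μ.real (parallelepiped b) * ∏ k, (x (b k))⁻¹ := by rw [integral_exp_neg_pi_Ioi hx]

end Laplace

section Triangulation

open MeasureTheory

variable {ι V : Type*} [NormedAddCommGroup V] [NormedSpace ℝ V] [MeasurableSpace V]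

lemma IsBasisCell.measureReal_parallelepiped_pos (μ : Measure V) [μ.IsAddHaarMeasure] {a : ι → V}
    {s : Finset ι} (hs : IsBasisCell a s) : 0 < μ.real (parallelepiped (s.restrict a)) :=
  hs.coe_basis ▸ _root_.measureReal_parallelepiped_pos μ hs.basis

/-- `T` triangulates the cone spanned by the vectors `a i`. Lower-dimensional cones play no role, so
the cells are given by index sets, only their relative interiors have to be disjoint, and they
have to cover the cone up to a null set. -/
structure IsTriangulation (μ : Measure V) (a : ι → V) (T : Finset (Finset ι)) : Prop where
  isBasisCell : ∀ s ∈ T, IsBasisCell a s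
  pairwiseDisjoint : (T : Set (Finset ι)).PairwiseDisjoint fun s => openCone (s.restrict a)
  ae_eq : ⋃ s ∈ T, openCone (s.restrict a) =ᵐ[μ] (PointedCone.hull ℝ (Set.range a) : Set V)

namespace IsTriangulation

variable {μ : Measure V} [μ.IsAddHaarMeasure] {a : ι → V} {T : Finset (Finset ι)}

lemma integral_exp_neg [BorelSpace V] [FiniteDimensional ℝ V] (hT : IsTriangulation μ a T)
    {x : Module.Dual ℝ V} (hx : ∀ i, 0 < x (a i)) :
    ∫ y in (PointedCone.hull ℝ (Set.range a) : Set V), Real.exp (-x y) ∂μ =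
      ∑ s ∈ T, μ.real (parallelepiped (s.restrict a)) * ∏ i ∈ s, (x (a i))⁻¹ := by
  have cell (s) (hs : s ∈ T) : ∫ y in openCone (s.restrict a), Real.exp (-x y) ∂μ =
      μ.real (parallelepiped (s.restrict a)) * ∏ i ∈ s, (x (a i))⁻¹ := by
    rw [← (hT.isBasisCell s hs).coe_basis, integral_exp_neg_openCone μ, IsBasisCell.coe_basis,
      ← prod_coe_sort s]
    · rfl
    · exact fun i => (hT.isBasisCell s hs).coe_basis ▸ hx i
  have cell_ne_zero (s) (hs : s ∈ T) :
      ∫ y in openCone (s.restrict a), Real.exp (-x y) ∂μ ≠ 0 := by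
    have volume_pos := (hT.isBasisCell s hs).measureReal_parallelepiped_pos μ
    rw [cell s hs]
    exact (mul_pos volume_pos (prod_pos fun i _ => inv_pos.mpr (hx i))).ne'
  rw [← setIntegral_congr_set hT.ae_eq, integral_biUnion_finset T
    (fun s hs => (hT.isBasisCell s hs).isOpen_openCone.measurableSet)
    hT.pairwiseDisjoint fun s hs => .of_integral_ne_zero (cell_ne_zero s hs)]
  exact sum_congr rfl cell

lemma nonempty [Finite ι] [FiniteDimensional ℝ V] (hT : IsTriangulation μ a T)
    (hspan : ⊤ ≤ Submodule.span ℝ (Set.range a)) : T.Nonempty := by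
  have := Fintype.ofFinite ι
  by_contra hne
  rw [not_nonempty_iff_eq_empty] at hne
  have null : μ (PointedCone.hull ℝ (Set.range a) : Set V) = 0 := by
    rw [← measure_congr hT.ae_eq, hne]
    simp
  have pos : 0 < μ (openCone a) :=
    (isOpen_openCone hspan).measure_pos μ ⟨∑ i, (1 : ℝ) • a i, fun _ => 1, by simp, rfl⟩
  exact pos.ne' (measure_mono_null (openCone_subset_hull a) null)

end IsTriangulation

end Triangulation

section Regular

open MeasureTheory

variable {ι V : Type*}

section Module

variable [Fintype ι] [AddCommGroup V] [Module ℝ V] {a : ι → V} {ω : ι → ℝ}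

/-- The indices at which the linear function `x` meets the heights `ω` over the vectors `a i`. -/
def contactSet (a : ι → V) (ω : ι → ℝ) (x : Module.Dual ℝ V) : Finset ι :=
  {i | x (a i) = ω i}

/-- The maximal cells of the regular subdivision of the cone spanned by the `a i` with heights `ω`:
the full-dimensional contact sets of the linear functions below `ω`, that is, the lower facets of
the cone spanned by the lifted vectors `(a i, ω i)`. -/
def regularSubdivision (a : ι → V) (ω : ι → ℝ) : Finset (Finset ι) :=
  {s | ∃ x : Module.Dual ℝ V, (∀ i, x (a i) ≤ ω i) ∧ contactSet a ω x = s ∧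
    ⊤ ≤ Submodule.span ℝ (a '' s)}

/-- Heights for which no linear function meets `ω` over linearly dependent vectors, so that the
regular subdivision is simplicial. -/
def IsGenericHeight (a : ι → V) (ω : ι → ℝ) : Prop :=
  ∀ x : Module.Dual ℝ V, LinearIndependent ℝ ((contactSet a ω x).restrict a)

lemma mem_contactSet {x : Module.Dual ℝ V} {i : ι} :
    i ∈ contactSet a ω x ↔ x (a i) = ω i := by
  simp [contactSet]

lemma mem_regularSubdivision {s : Finset ι} :
    s ∈ regularSubdivision a ω ↔ ∃ x : Module.Dual ℝ V, (∀ i, x (a i) ≤ ω i) ∧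
      contactSet a ω x = s ∧ ⊤ ≤ Submodule.span ℝ (a '' s) := by
  simp [regularSubdivision]

lemma IsGenericHeight.isBasisCell (hω : IsGenericHeight a ω) {s : Finset ι}
    (hs : s ∈ regularSubdivision a ω) : IsBasisCell a s := by
  obtain ⟨x, -, rfl, span_top⟩ := mem_regularSubdivision.mp hs
  exact ⟨hω x, span_top⟩

lemma ae_forall_contactSet_ne {s : Finset ι} (hs : ¬LinearIndependent ℝ (s.restrict a)) :
    ∀ᵐ ω : ι → ℝ, ∀ x : Module.Dual ℝ V, contactSet a ω x ≠ s := by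
  obtain ⟨b, relation, i, hi⟩ := Fintype.not_linearIndependent_iff.mp hs
  let φ : Module.Dual ℝ (ι → ℝ) := Fintype.linearCombination ℝ b ∘ₗ LinearMap.funLeft ℝ ℝ (↑)
  have φ_apply (ω : ι → ℝ) : φ ω = ∑ j : s, ω j * b j := rfl
  have ker_ne_top : LinearMap.ker φ ≠ ⊤ := fun h => hi <| by
    have : φ (Pi.single ↑i 1) = 0 := LinearMap.mem_ker.mp (h ▸ trivial)
    simpa [φ_apply, Pi.single_apply] using this
  filter_upwards [measure_eq_zero_iff_ae_notMem.mp
    (Measure.addHaar_submodule volume _ ker_ne_top)] with ω hω x hx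
  refine hω (LinearMap.mem_ker.mpr ?_)
  calc φ ω = ∑ j : s, x (a j) * b j := (φ_apply ω).trans <| sum_congr rfl fun j _ => by
        rw [mem_contactSet.mp (hx ▸ j.2 : (j : ι) ∈ contactSet a ω x)]
    _ = x (∑ j, b j • s.restrict a j) := by simp [mul_comm]
    _ = 0 := by rw [relation, map_zero]

lemma ae_isGenericHeight (a : ι → V) : ∀ᵐ ω : ι → ℝ, IsGenericHeight a ω := by
  have avoid : ∀ᵐ ω : ι → ℝ, ∀ s : Finset ι, ¬LinearIndependent ℝ (s.restrict a) →
      ∀ x : Module.Dual ℝ V, contactSet a ω x ≠ s :=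
    ae_all_iff.mpr fun s => Filter.eventually_imp_distrib_left.mpr ae_forall_contactSet_ne
  filter_upwards [avoid] with ω hω x
  exact not_not.mp fun h => hω _ h x rfl

lemma exists_isGenericHeight_mem (a : ι → V) {U : Set (ι → ℝ)} (hU : IsOpen U)
    (hne : U.Nonempty) : ∃ ω ∈ U, IsGenericHeight a ω :=
  (Measure.dense_of_ae (ae_isGenericHeight a)).inter_open_nonempty U hU hne

lemma contactSet_subset_contactSet {x x' : Module.Dual ℝ V} {y : V}
    (hx' : ∀ i, x' (a i) ≤ ω i) (hy : y ∈ openCone ((contactSet a ω x).restrict a))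
    (hle : x y ≤ x' y) : contactSet a ω x ⊆ contactSet a ω x' := by
  obtain ⟨c, hc, rfl⟩ := hy
  have gap_nonneg (i : contactSet a ω x) : 0 ≤ c i * (ω i - x' (a i)) :=
    mul_nonneg (hc i).le (sub_nonneg.mpr (hx' i))
  have gap_sum : ∑ i, c i * (ω i - x' (a i)) ≤ 0 := by
    simp only [map_sum, map_smul, smul_eq_mul, restrict, mem_contactSet.mp (Subtype.prop _)] at hle
    simpa [mul_sub] using hle
  intro i hi
  have gap_zero := (sum_eq_zero_iff_of_nonneg fun i _ => gap_nonneg i).mp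
    (gap_sum.antisymm (sum_nonneg fun i _ => gap_nonneg i)) ⟨i, hi⟩ (mem_univ _)
  rw [mem_contactSet]
  linarith [(mul_eq_zero.mp gap_zero).resolve_left (hc _).ne']

lemma pairwiseDisjoint_openCone_regularSubdivision (hω : IsGenericHeight a ω) :
    (regularSubdivision a ω : Set (Finset ι)).PairwiseDisjoint
      fun s => openCone (s.restrict a) := by
  intro s hs t ht hst
  refine Set.disjoint_left.mpr fun y hys hyt => hst ?_
  have cell_s := hω.isBasisCell hs
  have cell_t := hω.isBasisCell ht
  obtain ⟨x, hx, rfl, -⟩ := mem_regularSubdivision.mp hs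
  obtain ⟨x', hx', rfl, -⟩ := mem_regularSubdivision.mp ht
  rcases le_total (x y) (x' y) with h | h
  · exact cell_s.eq_of_subset cell_t (contactSet_subset_contactSet hx' hys h)
  · exact (cell_t.eq_of_subset cell_s (contactSet_subset_contactSet hx hyt h)).symm

lemma exists_dual_apply_eq {s : Finset ι} (h : ∀ c : ι → ℝ, (∀ i ∉ s, c i = 0) →
      ∑ i, c i • a i = 0 → ∑ i, c i * ω i = 0) :
    ∃ x : Module.Dual ℝ V, ∀ i ∈ s, x (a i) = ω i := by
  let supported : Submodule ℝ (ι → ℝ) := Submodule.pi (s : Set ι)ᶜ fun _ => ⊥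
  have mem : Fintype.linearCombination ℝ ω ∘ₗ supported.subtype ∈
      (LinearMap.ker (Fintype.linearCombination ℝ a ∘ₗ supported.subtype)).dualAnnihilator :=
    (Submodule.mem_dualAnnihilator _).mpr fun c hc => h c c.2 hc
  rw [← LinearMap.range_dualMap_eq_dualAnnihilator_ker] at mem
  obtain ⟨x, hx⟩ := mem
  refine ⟨x, fun i hi => ?_⟩
  have single_mem : Pi.single i 1 ∈ supported := fun j hj =>
    Pi.single_eq_of_ne (ne_of_mem_of_not_mem hi hj).symm 1
  simpa [Fintype.linearCombination_apply, Pi.single_apply] using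
    LinearMap.congr_fun hx ⟨Pi.single i 1, single_mem⟩

/-- The ways to write `y` as a nonnegative combination of the `a i`. -/
def conicWeights (a : ι → V) (y : V) : Set (ι → ℝ) :=
  {c | 0 ≤ c ∧ ∑ i, c i • a i = y}

-- First-order optimality: `b` is a feasible direction, so `c + t • b` is feasible for small `t`.
lemma sum_mul_nonneg_of_isMinOn {y : V} {c : ι → ℝ} (hc : c ∈ conicWeights a y)
    (hmin : IsMinOn (fun c => ∑ i, c i * ω i) (conicWeights a y) c) {b : ι → ℝ}
    (hb : ∀ i, c i = 0 → 0 ≤ b i) (relation : ∑ i, b i • a i = 0) : 0 ≤ ∑ i, b i * ω i := by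
  have nonneg_nearby : ∀ᶠ t in nhdsWithin (0 : ℝ) (Set.Ioi 0), ∀ i, 0 ≤ c i + t * b i := by
    refine Filter.eventually_all.mpr fun i => ?_
    rcases (hc.1 i).eq_or_lt' with hi | hi
    · filter_upwards [self_mem_nhdsWithin] with t ht
      simpa [hi] using mul_nonneg ht.out.le (hb i hi)
    · have : Filter.Tendsto (fun t => c i + t * b i) (nhdsWithin 0 (Set.Ioi 0)) (nhds (c i)) :=
        Filter.Tendsto.mono_left (Continuous.tendsto' (by fun_prop) _ _ (by simp))
          nhdsWithin_le_nhds
      filter_upwards [this.eventually_const_lt hi] with t ht using ht.le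
  obtain ⟨t, feasible, ht⟩ := (nonneg_nearby.and self_mem_nhdsWithin).exists
  have moved_mem : c + t • b ∈ conicWeights a y :=
    ⟨feasible, by simp [add_smul, mul_smul, sum_add_distrib, ← smul_sum, relation, hc.2]⟩
  have moved_le : ∑ i, c i * ω i ≤ ∑ i, c i * ω i + t * ∑ i, b i * ω i := by
    simpa [add_mul, sum_add_distrib, mul_assoc, ← mul_sum] using hmin moved_mem
  exact nonneg_of_mul_nonneg_right (le_add_iff_nonneg_right _ |>.mp moved_le) ht

lemma mem_span_image_iff_exists_fun {s : Finset ι} {y : V} :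
    y ∈ Submodule.span ℝ (a '' s) ↔
      ∃ c : ι → ℝ, (∀ i ∉ s, c i = 0) ∧ ∑ i, c i • a i = y := by
  constructor
  · intro hy
    obtain ⟨c, supported, rfl⟩ := (Finsupp.mem_span_image_iff_linearCombination ℝ).mp hy
    refine ⟨c, fun i hi => Finsupp.notMem_support_iff.mp fun h => hi (supported h), ?_⟩
    rw [Finsupp.linearCombination_apply, Finsupp.sum_fintype _ _ (by simp)]
  · rintro ⟨c, hc, rfl⟩
    refine Submodule.sum_mem _ fun i _ => ?_
    by_cases hi : i ∈ s
    · exact Submodule.smul_mem _ _ (Submodule.subset_span ⟨i, hi, rfl⟩)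
    · simp [hc i hi]

-- The linear function `x` is the dual solution of the linear program minimized by `c`.
lemma exists_dual_of_isMinOn {y : V} {c : ι → ℝ} (hc : c ∈ conicWeights a y)
    (hmin : IsMinOn (fun c => ∑ i, c i * ω i) (conicWeights a y) c) {s : Finset ι}
    (hs : ∀ i, i ∈ s ↔ c i ≠ 0) (hspan : ⊤ ≤ Submodule.span ℝ (a '' s)) :
    ∃ x : Module.Dual ℝ V, (∀ i, x (a i) ≤ ω i) ∧ s ⊆ contactSet a ω x := by
  have optimal {b : ι → ℝ} (hb : ∀ i ∉ s, 0 ≤ b i) (relation : ∑ i, b i • a i = 0) :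
      0 ≤ ∑ i, b i * ω i :=
    sum_mul_nonneg_of_isMinOn hc hmin (fun i hi => hb i (by simp [hs, hi])) relation
  obtain ⟨x, hx⟩ : ∃ x : Module.Dual ℝ V, ∀ i ∈ s, x (a i) = ω i := by
    refine exists_dual_apply_eq fun b hb relation => ?_
    refine le_antisymm ?_ (optimal (fun i hi => (hb i hi).ge) relation)
    simpa using optimal (b := -b) (fun i hi => by simp [hb i hi]) (by simp [relation])
  refine ⟨x, fun j => ?_, fun i hi => mem_contactSet.mpr (hx i hi)⟩
  obtain ⟨β, hβ, hj⟩ := mem_span_image_iff_exists_fun.mp (hspan (Submodule.mem_top (x := a j)))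
  have x_apply : x (a j) = ∑ i, β i * ω i := by
    rw [← hj, map_sum]
    refine sum_congr rfl fun i _ => ?_
    by_cases hi : i ∈ s
    · rw [map_smul, hx i hi, smul_eq_mul]
    · simp [hβ i hi]
  have single_nonneg : (0 : ι → ℝ) ≤ Pi.single j 1 := Pi.single_nonneg.mpr zero_le_one
  have improvement := optimal (b := Pi.single j 1 - β)
    (fun i hi => by simpa [hβ i hi] using single_nonneg i)
    (by simp [sub_smul, hj, Pi.single_apply])
  simpa [sub_mul, Pi.single_apply, ← x_apply] using improvement

lemma exists_mem_regularSubdivision (hω : IsGenericHeight a ω) {y : V} {c : ι → ℝ}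
    (hc : c ∈ conicWeights a y)
    (hmin : IsMinOn (fun c => ∑ i, c i * ω i) (conicWeights a y) c)
    (hy : ∀ s : Finset ι, y ∈ Submodule.span ℝ (a '' s) → Submodule.span ℝ (a '' s) = ⊤) :
    ∃ s ∈ regularSubdivision a ω, y ∈ openCone (s.restrict a) := by
  let s : Finset ι := {i | c i ≠ 0}
  have mem_s (i : ι) : i ∈ s ↔ c i ≠ 0 := by simp [s]
  have span_top : ⊤ ≤ Submodule.span ℝ (a '' s) :=
    (hy s (mem_span_image_iff_exists_fun.mpr ⟨c, by simp [s], hc.2⟩)).ge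
  obtain ⟨x, hx, contact⟩ := exists_dual_of_isMinOn hc hmin mem_s span_top
  have contact_eq : s = contactSet a ω x :=
    IsBasisCell.eq_of_subset
      ⟨(hω x).comp (Set.inclusion contact) (Set.inclusion_injective _), span_top⟩
      ⟨hω x, span_top.trans (Submodule.span_mono (Set.image_mono contact))⟩ contact
  refine ⟨s, mem_regularSubdivision.mpr ⟨x, hx, contact_eq.symm, span_top⟩,
    fun i => c i, fun i => (hc.1 i).lt_of_ne' ((mem_s i).mp i.2), ?_⟩
  rw [← hc.2]
  exact Fintype.sum_of_injective _ Subtype.val_injective _ _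
    (fun i hi => by simp [not_not.mp (mt (mem_s i).mpr (by simpa using hi))]) fun i => rfl

end Module

section Normed

variable [NormedAddCommGroup V] [NormedSpace ℝ V] {a : ι → V} {ω : ι → ℝ}

lemma isCompact_conicWeights [Fintype ι] {p : Module.Dual ℝ V} (hp : ∀ i, 0 < p (a i)) (y : V) :
    IsCompact (conicWeights a y) := by
  have closed : IsClosed (conicWeights a y) :=
    isClosed_Ici.inter (isClosed_eq (by fun_prop) continuous_const)
  refine IsCompact.of_isClosed_subset
    (isCompact_Icc (a := (0 : ι → ℝ)) (b := fun i => p y / p (a i))) closed ?_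
  rintro c ⟨hc, rfl⟩
  refine ⟨hc, fun i => (le_div_iff₀ (hp i)).mpr ?_⟩
  simp only [map_sum, map_smul, smul_eq_mul]
  exact single_le_sum (f := fun i => c i * p (a i)) (fun j _ => mul_nonneg (hc j) (hp j).le)
    (mem_univ i)

lemma ae_span_eq_top_of_mem [Finite ι] [FiniteDimensional ℝ V] [MeasurableSpace V] [BorelSpace V]
    (μ : Measure V) [μ.IsAddHaarMeasure] (a : ι → V) :
    ∀ᵐ y ∂μ, ∀ s : Finset ι, y ∈ Submodule.span ℝ (a '' s) → Submodule.span ℝ (a '' s) = ⊤ := by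
  refine ae_all_iff.mpr fun s => ?_
  by_cases hs : Submodule.span ℝ (a '' s) = ⊤
  · exact .of_forall fun _ _ => hs
  · filter_upwards [measure_eq_zero_iff_ae_notMem.mp (Measure.addHaar_submodule μ _ hs)] with y hy h
    exact absurd h hy

theorem isTriangulation_regularSubdivision [Fintype ι] [FiniteDimensional ℝ V] [MeasurableSpace V]
    [BorelSpace V] (μ : Measure V) [μ.IsAddHaarMeasure] {p : Module.Dual ℝ V}
    (hp : ∀ i, 0 < p (a i)) (hω : IsGenericHeight a ω) :
    IsTriangulation μ a (regularSubdivision a ω) where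
  isBasisCell _ hs := hω.isBasisCell hs
  pairwiseDisjoint := pairwiseDisjoint_openCone_regularSubdivision hω
  ae_eq := by
    refine Filter.EventuallyLE.antisymm (.of_forall fun y hy => ?_) ?_
    · obtain ⟨s, -, hys⟩ := Set.mem_iUnion₂.mp hy
      exact Submodule.span_mono (range_finset_restrict a s ▸ Set.image_subset_range a s)
        (openCone_subset_hull _ hys)
    · filter_upwards [ae_span_eq_top_of_mem μ a] with y hy hull
      obtain ⟨c, hc, hmin⟩ := (isCompact_conicWeights hp y).exists_isMinOn
        (f := fun c => ∑ i, c i * ω i) (mem_hull_range_iff.mp hull) (by fun_prop)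
      obtain ⟨s, hs, hys⟩ := exists_mem_regularSubdivision hω hc hmin hy
      exact Set.mem_iUnion₂.mpr ⟨s, hs, hys⟩

end Normed

end Regular

section FlatAlternative

variable {ι V : Type*}

section Module

variable [AddCommGroup V] [Module ℝ V] {a : ι → V} {F : Finset ι}

lemma card_inter_eq_finrank_span [DecidableEq ι] {s : Finset ι}
    (hs : LinearIndependent ℝ (s.restrict a)) (F : Finset ι) :
    #(F ∩ s) = Module.finrank ℝ (Submodule.span ℝ (a '' ↑(F ∩ s))) := by
  have inter_independent : LinearIndependent ℝ ((F ∩ s).restrict a) :=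
    hs.comp (Set.inclusion inter_subset_right) (Set.inclusion_injective _)
  rw [← range_finset_restrict, finrank_span_eq_card inter_independent, Fintype.card_coe]

lemma card_inter_le_finrank_span [DecidableEq ι] {s : Finset ι}
    (hs : LinearIndependent ℝ (s.restrict a)) (F : Finset ι) :
    #(F ∩ s) ≤ Module.finrank ℝ (Submodule.span ℝ (a '' F)) := by
  have := FiniteDimensional.span_of_finite ℝ (F.finite_toSet.image a)
  rw [card_inter_eq_finrank_span hs]
  exact Submodule.finrank_mono (Submodule.span_mono (Set.image_mono inter_subset_left))

lemma span_inter_eq_of_finrank_le_card [DecidableEq ι] {s : Finset ι}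
    (hs : LinearIndependent ℝ (s.restrict a))
    (h : Module.finrank ℝ (Submodule.span ℝ (a '' F)) ≤ #(F ∩ s)) :
    Submodule.span ℝ (a '' ↑(F ∩ s)) = Submodule.span ℝ (a '' F) := by
  have := FiniteDimensional.span_of_finite ℝ (F.finite_toSet.image a)
  rw [card_inter_eq_finrank_span hs] at h
  exact Submodule.eq_of_le_of_finrank_le
    (Submodule.span_mono (Set.image_mono inter_subset_left)) h

variable [Fintype ι]

lemma exists_mem_stdSimplex_of_mem_convexHull_image {S : Set ι} {w : V}
    (hw : w ∈ convexHull ℝ (a '' S)) :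
    ∃ q ∈ stdSimplex ℝ ι, (∀ i ∉ S, q i = 0) ∧ ∑ i, q i • a i = w := by
  let weights : Set (ι → ℝ) := stdSimplex ℝ ι ∩ (Submodule.pi Sᶜ fun _ => ⊥ : Submodule ℝ (ι → ℝ))
  have convex : Convex ℝ (Fintype.linearCombination ℝ a '' weights) :=
    ((convex_stdSimplex ℝ ι).inter (Submodule.convex _)).linear_image _
  have image_subset : a '' S ⊆ Fintype.linearCombination ℝ a '' weights := by
    rintro _ ⟨i, hi, rfl⟩
    exact ⟨Pi.single i 1, ⟨single_mem_stdSimplex ℝ i, fun j hj =>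
      Pi.single_eq_of_ne (ne_of_mem_of_not_mem hi hj).symm 1⟩, by simp⟩
  obtain ⟨q, ⟨hq, hqS⟩, rfl⟩ := convexHull_min image_subset convex hw
  exact ⟨q, hq, hqS, rfl⟩

lemma exists_isGenericHeight_sum_lt {q : ι → ℝ} (hq : q ∈ stdSimplex ℝ ι) (hqF : ∀ i ∈ F, q i = 0)
    {κ : Type*} [Finite κ] {β : κ → ι → ℝ} (hβ : ∀ k, ∀ i ∉ F, β k i = 0) (a : ι → V) :
    ∃ ω, IsGenericHeight a ω ∧ ∀ k, ∑ i, q i * ω i < ∑ i, β k i * ω i := by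
  have isOpen : IsOpen {ω : ι → ℝ | ∀ k, ∑ i, q i * ω i < ∑ i, β k i * ω i} := by
    simp only [Set.ofPred_forall]
    exact isOpen_iInter_of_finite fun k => isOpen_lt (by fun_prop) (by fun_prop)
  let ω₀ : ι → ℝ := fun i => if i ∈ F then 0 else -1
  have sum_q : ∑ i, q i * ω₀ i = -1 := by
    rw [← hq.2, ← sum_neg_distrib]
    refine sum_congr rfl fun i _ => ?_
    by_cases hi : i ∈ F <;> simp [ω₀, hi, hqF]
  have sum_β (k : κ) : ∑ i, β k i * ω₀ i = 0 := by
    refine sum_eq_zero fun i _ => ?_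
    by_cases hi : i ∈ F <;> simp [ω₀, hi, hβ]
  obtain ⟨ω, hω, generic⟩ := exists_isGenericHeight_mem a isOpen ⟨ω₀, fun k => by
    rw [sum_q, sum_β]; norm_num⟩
  exact ⟨ω, generic, hω⟩

-- A cell containing a basis of the span of `F` would see `w` at a height above that of the
-- combination of vectors off `F` representing it.
theorem exists_isGenericHeight_card_inter_lt [DecidableEq ι] (a : ι → V) {w : V}
    (hconv : w ∈ convexHull ℝ (a '' (F : Set ι)ᶜ)) (hspan : w ∈ Submodule.span ℝ (a '' F)) :
    ∃ ω, IsGenericHeight a ω ∧ ∀ s ∈ regularSubdivision a ω,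
      #(F ∩ s) < Module.finrank ℝ (Submodule.span ℝ (a '' F)) := by
  obtain ⟨q, hq, hqF, q_sum⟩ := exists_mem_stdSimplex_of_mem_convexHull_image hconv
  have combination (t : {t : Finset ι // t ⊆ F ∧ w ∈ Submodule.span ℝ (a '' t)}) :
      ∃ β : ι → ℝ, (∀ i ∉ t.1, β i = 0) ∧ ∑ i, β i • a i = w :=
    mem_span_image_iff_exists_fun.mp t.2.2
  choose β hβ β_sum using combination
  obtain ⟨ω, generic, separated⟩ := exists_isGenericHeight_sum_lt hq
    (fun i hi => hqF i (not_not.mpr hi)) (fun t i hi => hβ t i fun h => hi (t.2.1 h)) a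
  refine ⟨ω, generic, fun s hs => lt_of_not_ge fun hle => ?_⟩
  have span_eq := span_inter_eq_of_finrank_le_card (generic.isBasisCell hs).linearIndependent hle
  obtain ⟨x, hx, rfl, -⟩ := mem_regularSubdivision.mp hs
  let t : {t : Finset ι // t ⊆ F ∧ w ∈ Submodule.span ℝ (a '' t)} :=
    ⟨F ∩ contactSet a ω x, inter_subset_left, span_eq ▸ hspan⟩
  refine (separated t).not_ge ?_
  calc ∑ i, β t i * ω i = ∑ i, β t i * x (a i) := sum_congr rfl fun i _ => by
        by_cases hi : i ∈ t.1
        · rw [mem_contactSet.mp (mem_inter.mp hi).2]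
        · simp [hβ t i hi]
    _ = ∑ i, q i * x (a i) := by
        simpa [map_sum] using congrArg x ((β_sum t).trans q_sum.symm)
    _ ≤ ∑ i, q i * ω i := sum_le_sum fun i _ => mul_le_mul_of_nonneg_left (hx i) (hq.1 i)

end Module

theorem exists_dual_pos_off_of_disjoint [Finite ι] [NormedAddCommGroup V] [NormedSpace ℝ V]
    [FiniteDimensional ℝ V] {a : ι → V} {F : Set ι}
    (h : Disjoint (convexHull ℝ (a '' Fᶜ)) (Submodule.span ℝ (a '' F))) :
    ∃ u : Module.Dual ℝ V, (∀ i ∈ F, u (a i) = 0) ∧ ∀ i ∉ F, 0 < u (a i) := by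
  obtain ⟨f, s, t, hull_lt, hst, lt_span⟩ := geometric_hahn_banach_compact_closed
    (convex_convexHull ℝ _) ((Set.toFinite _).isCompact_convexHull ℝ)
    (Submodule.span ℝ (a '' F)).convex (Submodule.closed_of_finiteDimensional _) h
  have t_neg : t < 0 := by simpa using lt_span 0 (Submodule.zero_mem _)
  -- A functional bounded below on a subspace vanishes there.
  have f_span (b : V) (hb : b ∈ Submodule.span ℝ (a '' F)) : f b = 0 := by
    by_contra hne
    have := lt_span ((t / f b) • b) (Submodule.smul_mem _ _ hb)
    simp [div_mul_cancel₀ _ hne] at this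
  refine ⟨-f, fun i hi => ?_, fun i hi => ?_⟩
  · simpa using f_span _ (Submodule.subset_span ⟨i, hi, rfl⟩)
  · have := hull_lt _ (subset_convexHull ℝ _ ⟨i, hi, rfl⟩)
    simpa using this.trans (hst.trans t_neg)

end FlatAlternative

section LinearForm

variable {R τ : Type*} [CommSemiring R] [Fintype τ]

/-- The linear form with coefficient vector `b`. -/
def linearForm : (τ → R) →ₗ[R] MvPolynomial τ R :=
  Fintype.linearCombination R X

@[simp]
lemma eval_linearForm (x b : τ → R) : eval x (linearForm b) = x ⬝ᵥ b := by
  simp [linearForm, Fintype.linearCombination_apply, dotProduct, smul_eval, mul_comm]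

lemma linearForm_injective : Function.Injective (linearForm : (τ → R) → MvPolynomial τ R) :=
  (linearIndependent_X τ R).fintypeLinearCombination_injective

lemma range_linearForm :
    LinearMap.range (linearForm : (τ → R) →ₗ[R] MvPolynomial τ R) = homogeneousSubmodule τ R 1 := by
  rw [linearForm, Fintype.range_linearCombination, homogeneousSubmodule_one_eq_span_X]

lemma isHomogeneous_linearForm (b : τ → R) : (linearForm b).IsHomogeneous 1 := by
  rw [← mem_homogeneousSubmodule, ← range_linearForm]
  exact ⟨b, rfl⟩

lemma exists_eq_linearForm {ι : Type*} {ℓ : ι → MvPolynomial τ R} (h : ∀ i, (ℓ i).IsHomogeneous 1) :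
    ∃ a : ι → τ → R, ℓ = linearForm ∘ a := by
  simp only [← mem_homogeneousSubmodule, ← range_linearForm] at h
  choose a ha using h
  exact ⟨a, funext fun i => (ha i).symm⟩

end LinearForm

section Adjoint

open MeasureTheory

variable {ι τ : Type*} [Fintype ι] [DecidableEq ι] [Fintype τ] {a : ι → τ → ℝ}
  {T : Finset (Finset ι)}

/-- Warren's adjoint polynomial, computed from a triangulation `T` of the cone spanned by the
`a i`: the numerator, over the common denominator `∏ i, linearForm (a i)`, of the Laplace transform
of that cone. -/
def adjointPolynomial (a : ι → τ → ℝ) (T : Finset (Finset ι)) : MvPolynomial τ ℝ :=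
  ∑ s ∈ T, C (volume.real (parallelepiped (s.restrict a))) * ∏ i ∈ sᶜ, linearForm (a i)

lemma eval_adjointPolynomial (a : ι → τ → ℝ) (T : Finset (Finset ι)) (x : τ → ℝ) :
    eval x (adjointPolynomial a T) =
      ∑ s ∈ T, volume.real (parallelepiped (s.restrict a)) * ∏ i ∈ sᶜ, x ⬝ᵥ a i := by
  simp [adjointPolynomial]

lemma eval_adjointPolynomial_eq_integral (hT : IsTriangulation volume a T) {x : τ → ℝ}
    (hx : ∀ i, 0 < x ⬝ᵥ a i) :
    eval x (adjointPolynomial a T) = (∏ i, x ⬝ᵥ a i) *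
      ∫ y in (PointedCone.hull ℝ (Set.range a) : Set (τ → ℝ)), Real.exp (-(x ⬝ᵥ y)) := by
  have transform := hT.integral_exp_neg (x := dotProductEquiv ℝ τ x) hx
  simp only [dotProductEquiv_apply_apply] at transform
  rw [transform, eval_adjointPolynomial, mul_sum]
  refine sum_congr rfl fun s _ => ?_
  have prod_ne_zero : ∏ i ∈ s, x ⬝ᵥ a i ≠ 0 := prod_ne_zero_iff.mpr fun i _ => (hx i).ne'
  rw [← prod_mul_prod_compl s, prod_inv_distrib]
  field_simp

theorem adjointPolynomial_eq_of_isTriangulation {T' : Finset (Finset ι)}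
    (hT : IsTriangulation volume a T) (hT' : IsTriangulation volume a T') {p : τ → ℝ}
    (hp : ∀ i, 0 < p ⬝ᵥ a i) : adjointPolynomial a T = adjointPolynomial a T' := by
  have isOpen : IsOpen {x : τ → ℝ | ∀ i, 0 < x ⬝ᵥ a i} := by
    simp only [Set.ofPred_forall]
    exact isOpen_iInter_of_finite fun i =>
      isOpen_lt continuous_const (continuous_id.dotProduct continuous_const)
  obtain ⟨ε, hε, ball_subset⟩ := Metric.isOpen_iff.mp isOpen p hp
  refine funext_set (fun k => Metric.ball (p k) ε) (fun k => ?_) fun x hx => ?_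
  · rw [Real.ball_eq_Ioo]
    exact Set.Ioo_infinite (by linarith)
  · have pos := ball_subset (ball_pi p hε ▸ hx)
    rw [eval_adjointPolynomial_eq_integral hT pos, eval_adjointPolynomial_eq_integral hT' pos]

lemma adjointPolynomial_ne_zero (hT : IsTriangulation volume a T)
    (hspan : ⊤ ≤ Submodule.span ℝ (Set.range a)) {p : τ → ℝ} (hp : ∀ i, 0 < p ⬝ᵥ a i) :
    adjointPolynomial a T ≠ 0 := by
  have pos : 0 < eval p (adjointPolynomial a T) := by
    rw [eval_adjointPolynomial]
    exact sum_pos (fun s hs => mul_pos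
      ((hT.isBasisCell s hs).measureReal_parallelepiped_pos volume)
      (prod_pos fun i _ => hp i)) (hT.nonempty hspan)
  intro h
  simp [h] at pos

lemma isHomogeneous_adjointPolynomial (hT : ∀ s ∈ T, IsBasisCell a s) :
    (adjointPolynomial a T).IsHomogeneous (Fintype.card ι - Fintype.card τ) := by
  refine IsHomogeneous.sum _ _ _ fun s hs => IsHomogeneous.C_mul ?_ _
  have card_compl : Fintype.card ι - Fintype.card τ = ∑ _i ∈ sᶜ, 1 := by
    rw [sum_const, smul_eq_mul, mul_one, card_compl,
      ← Module.finrank_fintype_fun_eq_card ℝ (η := τ),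
      Module.finrank_eq_card_basis (hT s hs).basis, Fintype.card_coe]
  rw [card_compl]
  exact IsHomogeneous.prod _ _ _ fun i _ => isHomogeneous_linearForm (a i)

lemma adjointPolynomial_mem_pow {I : Ideal (MvPolynomial τ ℝ)} {F : Finset ι}
    (hF : ∀ i ∈ F, linearForm (a i) ∈ I) {m : ℕ} (hm : ∀ s ∈ T, m ≤ #(F \ s)) :
    adjointPolynomial a T ∈ I ^ m := by
  refine Ideal.sum_mem _ fun s hs => Ideal.mul_mem_left _ _ ?_
  have prod_mem : ∏ i ∈ F \ s, linearForm (a i) ∈ I ^ #(F \ s) := by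
    rw [← prod_const]
    exact Ideal.prod_mem_prod fun i hi => hF i (mem_sdiff.mp hi).1
  have subset_compl : F \ s ⊆ sᶜ := fun i hi => mem_compl.mpr (mem_sdiff.mp hi).2
  rw [← prod_sdiff subset_compl]
  exact Ideal.mul_mem_left _ _ (Ideal.pow_le_pow_right (hm s hs) prod_mem)

end Adjoint

section Polyhedron

lemma eq_zero_of_isBounded_of_ray {E : Type*} [NormedAddCommGroup E] [NormedSpace ℝ E] {P : Set E}
    (hP : Bornology.IsBounded P) {y z : E} (hray : ∀ t : ℝ, 0 ≤ t → y + t • z ∈ P) : z = 0 := by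
  obtain ⟨R, hR⟩ := hP.exists_norm_le
  by_contra hz
  have norm_pos : 0 < ‖z‖ := norm_pos_iff.mpr hz
  obtain ⟨k, hk⟩ := exists_nat_gt ((R + ‖y‖) / ‖z‖)
  rw [div_lt_iff₀ norm_pos] at hk
  refine hk.not_ge ?_
  calc k * ‖z‖ = ‖(y + (k : ℝ) • z) - y‖ := by simp [norm_smul]
    _ ≤ ‖y + (k : ℝ) • z‖ + ‖y‖ := norm_sub_le _ _
    _ ≤ R + ‖y‖ := by gcongr; exact hR _ (hray k k.cast_nonneg)

variable {ι E : Type*} [AddCommGroup E] [Module ℝ E]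

lemma exists_pos_of_affineSpan_eq_top {f : E →ᵃ[ℝ] ℝ} (hf : f ≠ 0) {P : Set E}
    (hP : affineSpan ℝ P = ⊤) (nonneg : ∀ y ∈ P, 0 ≤ f y) : ∃ y ∈ P, 0 < f y := by
  by_contra! nonpos
  exact hf (AffineMap.ext_on hP fun y hy => (nonpos y hy).antisymm (nonneg y hy))

lemma exists_pos_forall_nonneg_add_smul [Finite ι] (f : ι → E →ᵃ[ℝ] ℝ) {y : E}
    (hy : ∀ i, 0 ≤ f i y) {z : E} (hz : ∀ i, f i y = 0 → (f i).linear z = 0) :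
    ∃ ε : ℝ, 0 < ε ∧ ∀ i, 0 ≤ f i (y + ε • z) := by
  have apply_add (i : ι) (t : ℝ) : f i (y + t • z) = t * (f i).linear z + f i y := by
    simpa [add_comm] using (f i).map_vadd y (t • z)
  have nonneg_nearby : ∀ᶠ ε in nhdsWithin (0 : ℝ) (Set.Ioi 0), ∀ i, 0 ≤ f i (y + ε • z) := by
    refine Filter.eventually_all.mpr fun i => ?_
    simp only [apply_add]
    rcases (hy i).eq_or_lt' with h | h
    · simp [h, hz i h]
    · have : Filter.Tendsto (fun ε => ε * (f i).linear z + f i y) (nhdsWithin 0 (Set.Ioi 0))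
          (nhds (f i y)) :=
        Filter.Tendsto.mono_left (Continuous.tendsto' (by fun_prop) _ _ (by simp))
          nhdsWithin_le_nhds
      filter_upwards [this.eventually_const_lt h] with t ht using ht.le
  obtain ⟨ε, nonneg, ε_pos⟩ := (nonneg_nearby.and self_mem_nhdsWithin).exists
  exact ⟨ε, ε_pos, nonneg⟩

theorem direction_affineSpan_face [Finite ι] (f : ι → E →ᵃ[ℝ] ℝ) {F : Set ι} {y : E}
    (zero_on : ∀ i ∈ F, f i y = 0) (pos_off : ∀ i ∉ F, 0 < f i y) :
    (affineSpan ℝ {x | (∀ i, 0 ≤ f i x) ∧ ∀ i ∈ F, f i x = 0}).direction =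
      (Submodule.span ℝ ((fun i => (f i).linear) '' F)).dualCoannihilator := by
  have mem_coannihilator {z : E} :
      z ∈ (Submodule.span ℝ ((fun i => (f i).linear) '' F)).dualCoannihilator ↔
        ∀ i ∈ F, (f i).linear z = 0 := by
    rw [← SetLike.mem_coe, Submodule.coe_dualCoannihilator_span]
    simp
  have nonneg (i : ι) : 0 ≤ f i y :=
    if hi : i ∈ F then (zero_on i hi).ge else (pos_off i hi).le
  apply le_antisymm
  · rw [direction_affineSpan, vectorSpan, Submodule.span_le]
    rintro _ ⟨x, hx, x', hx', rfl⟩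
    refine mem_coannihilator.mpr fun i hi => ?_
    rw [AffineMap.linearMap_vsub, hx.2 i hi, hx'.2 i hi, vsub_self]
  · intro z hz
    rw [mem_coannihilator] at hz
    obtain ⟨ε, ε_pos, moved_nonneg⟩ := exists_pos_forall_nonneg_add_smul f nonneg
      fun i hi => hz i (not_not.mp fun h => (pos_off i h).ne' hi)
    have moved_zero (i : ι) (hi : i ∈ F) : f i (y + ε • z) = 0 := by
      simpa [add_comm, hz i hi, zero_on i hi] using (f i).map_vadd y (ε • z)
    rw [direction_affineSpan, ← Submodule.smul_mem_iff _ ε_pos.ne', ← add_sub_cancel_left y (ε • z)]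
    exact vsub_mem_vectorSpan ℝ ⟨moved_nonneg, moved_zero⟩ ⟨nonneg, zero_on⟩

end Polyhedron

section Dehomogenization

variable {n : ℕ}

/-- The affine function `y ↦ b₀ + b₁ y₁ + … + bₙ yₙ` obtained by restricting the linear form with
coefficient vector `b` to the hyperplane `X₀ = 1`. -/
def dehomogenization (b : Fin (n + 1) → ℝ) : (Fin n → ℝ) →ᵃ[ℝ] ℝ :=
  (dotProductEquiv ℝ (Fin n) (Fin.tail b)).toAffineMap + AffineMap.const ℝ _ (b 0)

lemma dehomogenization_apply (b : Fin (n + 1) → ℝ) (y : Fin n → ℝ) :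
    dehomogenization b y = lift1 y ⬝ᵥ b := by
  simp [dehomogenization, lift1, dotProduct, Fin.sum_univ_succ, Fin.tail, mul_comm, add_comm]

lemma dehomogenization_linear (b : Fin (n + 1) → ℝ) :
    (dehomogenization b).linear = dotProductEquiv ℝ (Fin n) (Fin.tail b) := by
  simp [dehomogenization]

lemma dehomogenization_ne_zero {b : Fin (n + 1) → ℝ} (hb : b ≠ 0) : dehomogenization b ≠ 0 := by
  contrapose! hb
  have head : b 0 = 0 := by simpa [dehomogenization] using congrArg (· 0) hb
  have tail : Fin.tail b = 0 := by
    simpa [dehomogenization_linear] using congrArg AffineMap.linear hb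
  exact funext <| Fin.cases head (congrFun tail)

lemma lift1_add_smul (y z : Fin n → ℝ) (t : ℝ) :
    lift1 (y + t • z) = lift1 y + t • (Fin.cons 0 z : Fin (n + 1) → ℝ) := by
  refine funext <| Fin.cases ?_ fun k => ?_ <;> simp [lift1]

lemma lift1_smul_tail {u : Fin (n + 1) → ℝ} (hu : u 0 ≠ 0) :
    lift1 ((u 0)⁻¹ • Fin.tail u) = (u 0)⁻¹ • u := by
  refine funext <| Fin.cases ?_ fun k => ?_ <;> simp [lift1, hu, Fin.tail]

-- A form vanishing at `u` is determined by its other coefficients, as `u 0 ≠ 0`.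
lemma finrank_span_dehomogenization_linear {ι : Type*} {a : ι → Fin (n + 1) → ℝ} {F : Set ι}
    {u : Fin (n + 1) → ℝ} (hu0 : u 0 ≠ 0) (hu : ∀ i ∈ F, u ⬝ᵥ a i = 0) :
    Module.finrank ℝ
        (Submodule.span ℝ ((fun i => (dehomogenization (a i)).linear) '' F)) =
      Module.finrank ℝ (Submodule.span ℝ (a '' F)) := by
  let linearPart : (Fin (n + 1) → ℝ) →ₗ[ℝ] Module.Dual ℝ (Fin n → ℝ) :=
    dotProductEquiv ℝ (Fin n) ∘ₗ LinearMap.funLeft ℝ ℝ Fin.succ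
  have image_eq : (fun i => (dehomogenization (a i)).linear) '' F = linearPart '' (a '' F) := by
    rw [Set.image_image]
    exact Set.image_congr fun i _ => dehomogenization_linear (a i)
  have span_le : Submodule.span ℝ (a '' F) ≤ LinearMap.ker (dotProductEquiv ℝ _ u) := by
    rw [Submodule.span_le]
    rintro _ ⟨i, hi, rfl⟩
    exact hu i hi
  have disjoint : Disjoint (Submodule.span ℝ (a '' F)) (LinearMap.ker linearPart) := by
    refine Submodule.disjoint_def.mpr fun b hb hker => ?_
    have tail (k : Fin n) : b k.succ = 0 :=
      congrFun ((dotProductEquiv ℝ (Fin n)).map_eq_zero_iff.mp hker) k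
    have head : u 0 * b 0 = 0 := by
      simpa [dotProduct, Fin.sum_univ_succ, tail] using span_le hb
    exact funext <| Fin.cases ((mul_eq_zero.mp head).resolve_left hu0) tail
  rw [image_eq, ← Submodule.map_span, ← LinearMap.range_domRestrict]
  exact LinearMap.finrank_range_of_inj (LinearMap.injective_domRestrict_iff.mpr disjoint)

end Dehomogenization

section Polytope

lemma span_range_eq_top_of_forall_dotProduct {ι τ : Type*} [Fintype τ] {a : ι → τ → ℝ}
    (h : ∀ u : τ → ℝ, (∀ i, u ⬝ᵥ a i = 0) → u = 0) : ⊤ ≤ Submodule.span ℝ (Set.range a) := by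
  by_contra hspan
  obtain ⟨f, hf, hker⟩ := Submodule.exists_le_ker_of_lt_top _ (lt_top_iff_not_top_le.mpr hspan)
  obtain ⟨u, rfl⟩ := (dotProductEquiv ℝ τ).surjective f
  exact hf (by rw [h u fun i => hker (Submodule.subset_span ⟨i, rfl⟩), map_zero])

variable {n d : ℕ} {a : Fin d → Fin (n + 1) → ℝ}

lemma mem_polytopeOf_linearForm {y : Fin n → ℝ} :
    y ∈ polytopeOf (linearForm ∘ a) ↔ ∀ i, 0 ≤ lift1 y ⬝ᵥ a i := by
  simp [polytopeOf]

lemma mem_flatOf_linearForm {v : Fin (n + 1) → ℝ} {i : Fin d} :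
    i ∈ flatOf (linearForm ∘ a) v ↔ v ⬝ᵥ a i = 0 := by
  simp [flatOf]

lemma rkOf_linearForm (a : Fin d → Fin (n + 1) → ℝ) (v : Fin (n + 1) → ℝ) :
    rkOf (linearForm ∘ a) v =
      Module.finrank ℝ (Submodule.span ℝ (a '' flatOf (linearForm ∘ a) v)) := by
  rw [rkOf, Set.image_comp, Submodule.span_image]
  exact (Submodule.equivMapOfInjective _ linearForm_injective _).finrank_eq.symm

lemma rkOf_le_card_flatOf (ℓ : Fin d → MvPolynomial (Fin (n + 1)) ℝ) (v : Fin (n + 1) → ℝ) :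
    rkOf ℓ v ≤ #(flatOf ℓ v) := by
  rw [rkOf, ← coe_image]
  exact (finrank_span_finset_le_card _).trans card_image_le

lemma exists_lift1_dotProduct_pos (hfull : affineSpan ℝ (polytopeOf (linearForm ∘ a)) = ⊤)
    {i : Fin d} (hi : a i ≠ 0) :
    ∃ y ∈ polytopeOf (linearForm ∘ a), 0 < lift1 y ⬝ᵥ a i := by
  simp only [← dehomogenization_apply]
  refine exists_pos_of_affineSpan_eq_top (dehomogenization_ne_zero hi) hfull fun y hy => ?_
  rw [dehomogenization_apply]
  exact mem_polytopeOf_linearForm.mp hy i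

lemma exists_forall_dotProduct_pos (ha : ∀ i, a i ≠ 0)
    (hfull : affineSpan ℝ (polytopeOf (linearForm ∘ a)) = ⊤) :
    ∃ p : Fin (n + 1) → ℝ, ∀ i, 0 < p ⬝ᵥ a i := by
  choose y mem pos using fun i => exists_lift1_dotProduct_pos hfull (ha i)
  refine ⟨∑ j, lift1 (y j), fun i => ?_⟩
  rw [sum_dotProduct]
  exact sum_pos' (fun j _ => mem_polytopeOf_linearForm.mp (mem j) i) ⟨i, mem_univ i, pos i⟩

-- Subtracting from `u` a multiple of a point of the polytope gives a recession direction.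
lemma head_pos_of_forall_dotProduct_nonneg
    (hbdd : Bornology.IsBounded (polytopeOf (linearForm ∘ a))) {y : Fin n → ℝ}
    (hy : y ∈ polytopeOf (linearForm ∘ a)) {i : Fin d} (hyi : 0 < lift1 y ⬝ᵥ a i)
    {u : Fin (n + 1) → ℝ} (hu : u ≠ 0) (nonneg : ∀ j, 0 ≤ u ⬝ᵥ a j) : 0 < u 0 := by
  by_contra! head_nonpos
  let z := u - u 0 • lift1 y
  have z_eq : Fin.cons 0 (Fin.tail z) = z := funext <| Fin.cases (by simp [z, lift1]) fun _ => rfl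
  have z_nonneg (j : Fin d) : 0 ≤ z ⬝ᵥ a j := by
    have := mul_nonpos_of_nonpos_of_nonneg head_nonpos (mem_polytopeOf_linearForm.mp hy j)
    simp only [z, sub_dotProduct, smul_dotProduct, smul_eq_mul]
    linarith [nonneg j]
  have tail_eq_zero : Fin.tail z = 0 := by
    refine eq_zero_of_isBounded_of_ray hbdd (y := y) fun t ht => ?_
    rw [mem_polytopeOf_linearForm] at hy ⊢
    intro j
    rw [lift1_add_smul, z_eq, add_dotProduct, smul_dotProduct]
    exact add_nonneg (hy j) (mul_nonneg ht (z_nonneg j))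
  have u_eq : u = u 0 • lift1 y := by
    refine sub_eq_zero.mp (z_eq.symm.trans ?_)
    rw [tail_eq_zero]
    exact funext <| Fin.cases rfl fun _ => rfl
  rcases head_nonpos.eq_or_lt with h | h
  · exact hu (by rw [u_eq, h, zero_smul])
  · refine (nonneg i).not_gt ?_
    rw [u_eq, smul_dotProduct]
    exact mul_neg_of_neg_of_pos h hyi

lemma eq_zero_of_forall_dotProduct_eq_zero
    (head_pos : ∀ u : Fin (n + 1) → ℝ, u ≠ 0 → (∀ i, 0 ≤ u ⬝ᵥ a i) → 0 < u 0)
    {u : Fin (n + 1) → ℝ} (hu : ∀ i, u ⬝ᵥ a i = 0) : u = 0 := by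
  by_contra hne
  have pos := head_pos u hne fun i => (hu i).ge
  have neg := head_pos (-u) (neg_ne_zero.mpr hne) fun i => by rw [neg_dotProduct, hu i, neg_zero]
  rw [Pi.neg_apply] at neg
  linarith

theorem faceOf_nonempty_and_finrank_direction {v u : Fin (n + 1) → ℝ} (hu0 : 0 < u 0)
    (zero_on : ∀ i ∈ flatOf (linearForm ∘ a) v, u ⬝ᵥ a i = 0)
    (pos_off : ∀ i ∉ flatOf (linearForm ∘ a) v, 0 < u ⬝ᵥ a i) :
    (faceOf (linearForm ∘ a) v).Nonempty ∧
      Module.finrank ℝ (affineSpan ℝ (faceOf (linearForm ∘ a) v)).direction =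
        n - rkOf (linearForm ∘ a) v := by
  set F := flatOf (linearForm ∘ a) v with hF
  have face_eq : faceOf (linearForm ∘ a) v = {x | (∀ i, 0 ≤ dehomogenization (a i) x) ∧
      ∀ i ∈ (F : Set (Fin d)), dehomogenization (a i) x = 0} := by
    ext x
    simp [faceOf, polytopeOf, dehomogenization_apply, hF]
  have apply_point (i : Fin d) :
      dehomogenization (a i) ((u 0)⁻¹ • Fin.tail u) = (u 0)⁻¹ * (u ⬝ᵥ a i) := by
    rw [dehomogenization_apply, lift1_smul_tail hu0.ne', smul_dotProduct, smul_eq_mul]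
  have point_zero (i : Fin d) (hi : i ∈ (F : Set (Fin d))) :
      dehomogenization (a i) ((u 0)⁻¹ • Fin.tail u) = 0 := by
    rw [apply_point, zero_on i hi, mul_zero]
  have point_pos (i : Fin d) (hi : i ∉ (F : Set (Fin d))) :
      0 < dehomogenization (a i) ((u 0)⁻¹ • Fin.tail u) := by
    rw [apply_point]
    exact mul_pos (inv_pos.mpr hu0) (pos_off i hi)
  constructor
  · exact face_eq ▸ ⟨_, fun i => if hi : i ∈ (F : Set (Fin d)) then (point_zero i hi).ge
      else (point_pos i hi).le, point_zero⟩
  · have := Subspace.finrank_add_finrank_dualCoannihilator_eq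
      (Submodule.span ℝ ((fun i => (dehomogenization (a i)).linear) '' (F : Set (Fin d))))
    rw [finrank_span_dehomogenization_linear hu0.ne' zero_on, Module.finrank_fin_fun] at this
    rw [face_eq, direction_affineSpan_face _ point_zero point_pos, rkOf_linearForm, ← hF]
    omega

lemma nlOf_le_card_sdiff {s : Finset (Fin d)} (hs : LinearIndependent ℝ (s.restrict a))
    (v : Fin (n + 1) → ℝ) :
    nlOf (linearForm ∘ a) v ≤ #(flatOf (linearForm ∘ a) v \ s) := by
  have inter_le := card_inter_le_finrank_span hs (flatOf (linearForm ∘ a) v)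
  have := card_sdiff_add_card_inter (flatOf (linearForm ∘ a) v) s
  rw [nlOf, rkOf_linearForm]
  omega

lemma ordOf_le_nlOf_add_one (ℓ : Fin d → MvPolynomial (Fin (n + 1)) ℝ) (v : Fin (n + 1) → ℝ) :
    ordOf ℓ v ≤ nlOf ℓ v + 1 := by
  unfold ordOf
  split_ifs <;> omega

lemma ordOf_eq_nlOf_of_disjoint
    (head_pos : ∀ u : Fin (n + 1) → ℝ, u ≠ 0 → (∀ i, 0 ≤ u ⬝ᵥ a i) → 0 < u 0)
    {v : Fin (n + 1) → ℝ} (hv : v ≠ 0)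
    (h : Disjoint (convexHull ℝ (a '' (flatOf (linearForm ∘ a) v : Set (Fin d))ᶜ))
      (Submodule.span ℝ (a '' flatOf (linearForm ∘ a) v))) :
    ordOf (linearForm ∘ a) v = nlOf (linearForm ∘ a) v := by
  obtain ⟨f, zero_on, pos_off⟩ := exists_dual_pos_off_of_disjoint h
  obtain ⟨u, rfl⟩ := (dotProductEquiv ℝ (Fin (n + 1))).surjective f
  obtain ⟨i, hi⟩ : ∃ i, v ⬝ᵥ a i ≠ 0 := by
    by_contra! hzero
    exact hv (eq_zero_of_forall_dotProduct_eq_zero head_pos hzero)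
  have u_ne_zero : u ≠ 0 := by
    rintro rfl
    simpa using pos_off i (mt mem_flatOf_linearForm.mp hi)
  have u_nonneg (j : Fin d) : 0 ≤ u ⬝ᵥ a j :=
    if hj : j ∈ flatOf (linearForm ∘ a) v then (zero_on j hj).ge
    else (pos_off j hj).le
  exact if_pos <|
    faceOf_nonempty_and_finrank_direction (head_pos u u_ne_zero u_nonneg) zero_on pos_off

theorem exists_isTriangulation_ordOf_le_card_sdiff
    (head_pos : ∀ u : Fin (n + 1) → ℝ, u ≠ 0 → (∀ i, 0 ≤ u ⬝ᵥ a i) → 0 < u 0)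
    {p : Fin (n + 1) → ℝ} (hp : ∀ i, 0 < p ⬝ᵥ a i) {v : Fin (n + 1) → ℝ} (hv : v ≠ 0) :
    ∃ T, IsTriangulation MeasureTheory.volume a T ∧
      ∀ s ∈ T, ordOf (linearForm ∘ a) v ≤ #(flatOf (linearForm ∘ a) v \ s) := by
  have triangulates {ω : Fin d → ℝ} (hω : IsGenericHeight a ω) :=
    isTriangulation_regularSubdivision MeasureTheory.volume (p := dotProductEquiv ℝ _ p) hp hω
  set F := flatOf (linearForm ∘ a) v
  by_cases h : Disjoint (convexHull ℝ (a '' (F : Set (Fin d))ᶜ)) (Submodule.span ℝ (a '' F))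
  · obtain ⟨ω, -, hω⟩ := exists_isGenericHeight_mem a isOpen_univ Set.univ_nonempty
    refine ⟨_, triangulates hω, fun s hs => ?_⟩
    rw [ordOf_eq_nlOf_of_disjoint head_pos hv h]
    exact nlOf_le_card_sdiff (hω.isBasisCell hs).linearIndependent v
  · obtain ⟨w, hconv, hspan⟩ := Set.not_disjoint_iff.mp h
    obtain ⟨ω, hω, inter_lt⟩ := exists_isGenericHeight_card_inter_lt a hconv hspan
    refine ⟨_, triangulates hω, fun s hs => (ordOf_le_nlOf_add_one _ _).trans ?_⟩
    have inter_lt_rk : #(F ∩ s) < rkOf (linearForm ∘ a) v :=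
      rkOf_linearForm a v ▸ inter_lt s hs
    have rk_le : rkOf (linearForm ∘ a) v ≤ #F := rkOf_le_card_flatOf _ v
    have := card_sdiff_add_card_inter F s
    change #F - rkOf (linearForm ∘ a) v + 1 ≤ _
    omega

end Polytope

theorem adjoint_existence_general {n d : ℕ} (hd : 0 < d)
    (ℓ : Fin d → MvPolynomial (Fin (n + 1)) ℝ) (hhom : ∀ i, (ℓ i).IsHomogeneous 1)
    (hne : ∀ i, ℓ i ≠ 0) (hbdd : Bornology.IsBounded (polytopeOf ℓ))
    (hfull : affineSpan ℝ (polytopeOf ℓ) = ⊤) :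
    ∃ f : MvPolynomial (Fin (n + 1)) ℝ, f ≠ 0 ∧ f.IsHomogeneous (d - n - 1) ∧
      ∀ v : Fin (n + 1) → ℝ, v ≠ 0 → f ∈ pointIdealR v ^ ordOf ℓ v := by
  obtain ⟨a, rfl⟩ := exists_eq_linearForm hhom
  have ha (i : Fin d) : a i ≠ 0 := fun h => hne i (by rw [Function.comp_apply, h, map_zero])
  obtain ⟨p, hp⟩ := exists_forall_dotProduct_pos ha hfull
  obtain ⟨y, hy, hyi⟩ := exists_lift1_dotProduct_pos hfull (ha ⟨0, hd⟩)
  have head_pos (u : Fin (n + 1) → ℝ) (hu : u ≠ 0) (nonneg : ∀ i, 0 ≤ u ⬝ᵥ a i) : 0 < u 0 :=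
    head_pos_of_forall_dotProduct_nonneg hbdd hy hyi hu nonneg
  have span_top : ⊤ ≤ Submodule.span ℝ (Set.range a) := span_range_eq_top_of_forall_dotProduct
    fun _ hu => eq_zero_of_forall_dotProduct_eq_zero head_pos hu
  have triangulation {v : Fin (n + 1) → ℝ} (hv : v ≠ 0) :=
    exists_isTriangulation_ordOf_le_card_sdiff head_pos hp hv
  obtain ⟨T₀, hT₀, -⟩ := triangulation one_ne_zero
  refine ⟨adjointPolynomial a T₀, adjointPolynomial_ne_zero hT₀ span_top hp, ?_, fun v hv => ?_⟩
  · simpa [Nat.sub_sub] using isHomogeneous_adjointPolynomial hT₀.isBasisCell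
  · obtain ⟨T, hT, ord_le⟩ := triangulation hv
    rw [adjointPolynomial_eq_of_isTriangulation hT₀ hT hp]
    refine adjointPolynomial_mem_pow (fun i hi => Ideal.subset_span ?_) ord_le
    exact ⟨isHomogeneous_linearForm _, (mem_filter.mp hi).2⟩

/-- **existence.** There exists a nonzero homogeneous polynomial
`f ∈ ℝ[X₀,…,Xₙ]` of degree `d − n − 1` with `f ∈ I_v^{ord_P(L_v)}` for every nonzero
`v ∈ ℝ^{n+1}` (Warren's adjoint is such a polynomial). -/
theorem adjoint_existence {n d : ℕ}
    (ℓ : Fin d → MvPolynomial (Fin (n + 1)) ℝ) (hP : IsPolytopeSetup ℓ) :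
    ∃ f : MvPolynomial (Fin (n + 1)) ℝ, f ≠ 0 ∧ f.IsHomogeneous (d - n - 1) ∧
      ∀ v : Fin (n + 1) → ℝ, v ≠ 0 → f ∈ pointIdealR v ^ ordOf ℓ v :=
  adjoint_existence_general (n.succ_pos.trans_le hP.hd) ℓ hP.hhom hP.hne hP.hcpt.isBounded
    hP.hfull

end
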